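/- Let h = (h_{ijk}) be a fully symmetric real 3-tensor with indices in {1, …, 2n}, and define Q̃₂(h) as the sum over pairs (i, j) with i odd < j odd of: 3(h_{ijj}² + h_{ij'j'}² + h_{i'jj}² + h_{i'j'j'}² + h_{jii}² + h_{j'ii}² + h_{ji'i'}² + h_{j'i'i'}²) + 8(h_{ii'j}² + h_{ii'j'}² + h_{ijj'}² + h_{i'jj'}²) − 2(h_{iij} h_{i'i'j} + h_{iij'} h_{i'i'j'}) − 2(h_{jji} h_{j'j'i} + h_{jji'} h_{j'j'i'}) + 4(h_{i'ji} h_{j'ii} − h_{iji} h_{j'i'i}) + 4(h_{i'ji'} h_{j'ii'} − h_{iji'} h_{j'i'i'}) + 4(h_{i'jj} h_{j'ij} − h_{ijj} h_{j'i'j}) + 4(h_{i'jj'} h_{j'ij'} − h_{ijj'} h_{j'i'j'}). Then Q̃₂(h) ≥ 2 Σ_{i odd < j odd} (h_{ijj}² + h_{ij'j'}² + h_{i'jj}² + h_{i'j'j'}² + h_{jii}² + h_{j'ii}² + h_{ji'i'}² + h_{j'i'i'}² + h_{ii'j}² + h_{ii'j'}² + h_{ijj'}² + h_{i'jj'}²).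 -/

import Mathlib

/-!
The inequality holds summand by summand. Using the symmetry of `h`, twice the sum of squares
subtracted from the summand of `Q̃₂` for `(i, j)` is
`(h_{j'ii} - h_{j'i'i'} + 2 h_{ii'j})² + (h_{jii} - h_{ji'i'} - 2 h_{ii'j'})²`
`+ (h_{i'jj} - h_{i'j'j'} + 2 h_{ijj'})² + (h_{ijj} - h_{ij'j'} - 2 h_{i'jj'})²`
`+ 2 (h_{ii'j}² + h_{ii'j'}² + h_{ijj'}² + h_{i'jj'}²)`, hence nonnegative.
-/

open Finset

/-- The involution `i ↦ i'` on `Fin (2n)` (0-indexed: `i' = i+1` for even `i`,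
`i' = i−1` for odd `i`). -/
def pr (n : ℕ) (i : Fin (2 * n)) : Fin (2 * n) :=
  if _h : (i : ℕ) % 2 = 0 then ⟨(i : ℕ) + 1, by have := i.isLt; omega⟩
  else ⟨(i : ℕ) - 1, by have := i.isLt; omega⟩

/-- The summand of `Q̃₂` associated to the pair `(i, j)`. -/
def q2body (n : ℕ) (h : Fin (2 * n) → Fin (2 * n) → Fin (2 * n) → ℝ)
    (i j : Fin (2 * n)) : ℝ :=
  let i' := pr n i
  let j' := pr n j
  3 * (h i j j ^ 2 + h i j' j' ^ 2 + h i' j j ^ 2 + h i' j' j' ^ 2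
      + h j i i ^ 2 + h j' i i ^ 2 + h j i' i' ^ 2 + h j' i' i' ^ 2)
    + 8 * (h i i' j ^ 2 + h i i' j' ^ 2 + h i j j' ^ 2 + h i' j j' ^ 2)
    - 2 * (h i i j * h i' i' j + h i i j' * h i' i' j')
    - 2 * (h j j i * h j' j' i + h j j i' * h j' j' i')
    + 4 * (h i' j i * h j' i i - h i j i * h j' i' i)
    + 4 * (h i' j i' * h j' i i' - h i j i' * h j' i' i')
    + 4 * (h i' j j * h j' i j - h i j j * h j' i' j)
    + 4 * (h i' j j' * h j' i j' - h i j j' * h j' i' j')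

/-- The bound holds for each pair `(i, j)` separately, with no parity or order condition. -/
lemma q2body_lower_bound (n : ℕ)
    (h : Fin (2 * n) → Fin (2 * n) → Fin (2 * n) → ℝ)
    (hsym1 : ∀ i j k, h i j k = h j i k)
    (hsym2 : ∀ i j k, h i j k = h i k j) (i j : Fin (2 * n)) :
    2 * (h i j j ^ 2 + h i (pr n j) (pr n j) ^ 2 + h (pr n i) j j ^ 2
          + h (pr n i) (pr n j) (pr n j) ^ 2 + h j i i ^ 2 + h (pr n j) i i ^ 2
          + h j (pr n i) (pr n i) ^ 2 + h (pr n j) (pr n i) (pr n i) ^ 2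
          + h i (pr n i) j ^ 2 + h i (pr n i) (pr n j) ^ 2
          + h i j (pr n j) ^ 2 + h (pr n i) j (pr n j) ^ 2) ≤ q2body n h i j := by
  simp only [q2body]
  generalize pr n i = i'
  generalize pr n j = j'
  have rot : ∀ a b c, h a b c = h c a b := fun a b c => by rw [hsym2, hsym1]
  have rot' : ∀ a b c, h a b c = h b c a := fun a b c => by rw [hsym1, hsym2]
  have rev : ∀ a b c, h a b c = h c b a := fun a b c => by rw [rot, hsym2]
  -- Every entry occurring in `q2body` is rewritten as one of the twelve entries on the left.
  have e1 := rot i i j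
  have e2 := rot i' i' j
  have e3 := rot i i j'
  have e4 := rot i' i' j'
  have e5 := rot j j i
  have e6 := rot j' j' i
  have e7 := rot j j i'
  have e8 := rot j' j' i'
  have e9 := rot i' j i
  have e10 := hsym1 i j i
  have e11 := rev j' i' i
  have e12 := hsym1 i' j i'
  have e13 := rot' j' i i'
  have e14 := hsym2 i j i'
  have e15 := rot' j' i j
  have e16 := rot' j' i' j
  have e17 := hsym1 j' i j'
  have e18 := hsym1 j' i' j'
  rw [e1, e2, e3, e4, e5, e6, e7, e8, e9, e10, e11, e12, e13, e14, e15, e16, e17, e18]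
  nlinarith [sq_nonneg (h j' i i - h j' i' i' + 2 * h i i' j),
    sq_nonneg (h j i i - h j i' i' - 2 * h i i' j'),
    sq_nonneg (h i' j j - h i' j' j' + 2 * h i j j'),
    sq_nonneg (h i j j - h i j' j' - 2 * h i' j j'),
    sq_nonneg (h i i' j'), sq_nonneg (h i j j'), sq_nonneg (h i' j j'), sq_nonneg (h i i' j)]

/-- For a fully symmetric real 3-tensor `h`, the quadratic form
`Q̃₂(h)`, summed over pairs `i odd < j odd`, is bounded below by
`2 Σ_{i odd < j odd} (h_{ijj}² + h_{ij'j'}² + h_{i'jj}² + h_{i'j'j'}² + h_{jii}²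
 + h_{j'ii}² + h_{ji'i'}² + h_{j'i'i'}² + h_{ii'j}² + h_{ii'j'}² + h_{ijj'}² + h_{i'jj'}²)`.
("odd" refers to the paper's 1-based indexing, i.e. `(i : ℕ) % 2 = 0` here.) -/
theorem Q2_lower_bound (n : ℕ)
    (h : Fin (2 * n) → Fin (2 * n) → Fin (2 * n) → ℝ)
    (hsym1 : ∀ i j k, h i j k = h j i k)
    (hsym2 : ∀ i j k, h i j k = h i k j) :
    (∑ i ∈ univ.filter (fun i : Fin (2 * n) => (i : ℕ) % 2 = 0),
      ∑ j ∈ univ.filter (fun j : Fin (2 * n) => (j : ℕ) % 2 = 0 ∧ i < j),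
        q2body n h i j) ≥
    2 * ∑ i ∈ univ.filter (fun i : Fin (2 * n) => (i : ℕ) % 2 = 0),
      ∑ j ∈ univ.filter (fun j : Fin (2 * n) => (j : ℕ) % 2 = 0 ∧ i < j),
        (h i j j ^ 2 + h i (pr n j) (pr n j) ^ 2 + h (pr n i) j j ^ 2
          + h (pr n i) (pr n j) (pr n j) ^ 2 + h j i i ^ 2 + h (pr n j) i i ^ 2
          + h j (pr n i) (pr n i) ^ 2 + h (pr n j) (pr n i) (pr n i) ^ 2
          + h i (pr n i) j ^ 2 + h i (pr n i) (pr n j) ^ 2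
          + h i j (pr n j) ^ 2 + h (pr n i) j (pr n j) ^ 2) := by
  rw [ge_iff_le, Finset.mul_sum]
  refine Finset.sum_le_sum fun i _ => ?_
  rw [Finset.mul_sum]
  exact Finset.sum_le_sum fun j _ => q2body_lower_bound n h hsym1 hsym2 i j
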